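/- arXiv:1509.03745 — 3 statements merged into one kernel-verified Lean document; each statement's English description precedes it below -/
import Mathlib

section
/- Let Q be as in the context. Then there exists a unique pair of real numbers (a₀, b₀) with a₀ < b₀ such that φ(a₀,b₀) = 0 and ψ(a₀,b₀) = 0. -/
open MeasureTheory intervalIntegral

/-- `φ(a,b) = ∫₀¹ Q'((1−t)b + t·a)/√(t(1−t)) dt`. -/
noncomputable def phi (Q : Polynomial ℝ) (a b : ℝ) : ℝ :=
  ∫ t in (0:ℝ)..1, Q.derivative.eval ((1 - t) * b + t * a) / Real.sqrt (t * (1 - t))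

/-- `ψ(a,b) = (b−a)·∫₀¹ Q'((1−t)b + t·a)·√((1−t)/t) dt − 2π`. -/
noncomputable def psi (Q : Polynomial ℝ) (a b : ℝ) : ℝ :=
  (b - a) * (∫ t in (0:ℝ)..1, Q.derivative.eval ((1 - t) * b + t * a) * Real.sqrt ((1 - t) / t))
    - 2 * Real.pi

/-!
With `c = (a + b) / 2` and `r = (b - a) / 2`, the substitution `(1 - t) b + t a = c + r cos θ` turns
the two equations into `Φ(c, r) = 0` and `r H(c, r) = 2π`, where, for `f = Q'`,
`Φ = ∫₀^π f(c + r cos θ) dθ` and `H = ∫₀^π f(c + r cos θ) cos θ dθ`.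

Since `f` is strictly increasing, `(Φ, H)` is a strictly monotone vector field on the plane. Two
solutions therefore coincide, because `r ↦ 2π / r` is decreasing. For existence, the zero set of `Φ`
is the graph of a `1`-Lipschitz function `c(r)`, and along this graph `H` is increasing and vanishes
at `r = 0`; hence `r H(c(r), r)` grows continuously from `0` to `∞`.
-/

section

open Real

/-- The integral of `x ↦ f (c + r * x)` against the (unnormalised) arcsine law `dx / √(1 - x ^ 2)`
on `[-1, 1]`, written in the angular variable `x = cos θ`. -/
noncomputable def arcsineIntegral (f : ℝ → ℝ) (c r : ℝ) : ℝ :=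
  ∫ θ in 0..π, f (c + r * cos θ)

/-- The first moment of `x ↦ f (c + r * x)` against the (unnormalised) arcsine law
`dx / √(1 - x ^ 2)` on `[-1, 1]`, written in the angular variable `x = cos θ`. -/
noncomputable def arcsineMoment (f : ℝ → ℝ) (c r : ℝ) : ℝ :=
  ∫ θ in 0..π, f (c + r * cos θ) * cos θ

lemma integral_comp_one_sub_two_mul_div_sqrt (g : ℝ → ℝ) :
    ∫ t in (0 : ℝ)..1, g (1 - 2 * t) / √(t * (1 - t)) = ∫ θ in 0..π, g (cos θ) := by
  have sqrt_weight (t : ℝ) : √(1 - (1 - 2 * t) ^ 2)⁻¹ = (√(t * (1 - t)))⁻¹ / 2 := by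
    rw [show 1 - (1 - 2 * t) ^ 2 = 2 ^ 2 * (t * (1 - t)) by ring, sqrt_inv,
      sqrt_mul (by positivity), sqrt_sq zero_le_two, mul_inv, div_eq_inv_mul]
  calc ∫ t in (0 : ℝ)..1, g (1 - 2 * t) / √(t * (1 - t))
      = 2 * ∫ t in (0 : ℝ)..1, g (1 - 2 * t) * √(1 - (1 - 2 * t) ^ 2)⁻¹ := by
        rw [← intervalIntegral.integral_const_mul]
        congr 1 with t
        rw [sqrt_weight]
        ring
    _ = ∫ x in (-1 : ℝ)..1, g x * √(1 - x ^ 2)⁻¹ := by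
        rw [integral_comp_sub_mul (fun x ↦ g x * √(1 - x ^ 2)⁻¹) two_ne_zero,
          smul_eq_mul, mul_inv_cancel_left₀ two_ne_zero]
        norm_num
    _ = ∫ θ in 0..π, g (cos θ) := by
        rw [← Polynomial.Chebyshev.integral_measureT,
          Polynomial.Chebyshev.integral_measureT_eq_integral_cos]

lemma integral_div_sqrt_eq_arcsineIntegral (f : ℝ → ℝ) (a b : ℝ) :
    ∫ t in (0 : ℝ)..1, f ((1 - t) * b + t * a) / √(t * (1 - t)) =
      arcsineIntegral f ((a + b) / 2) ((b - a) / 2) := by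
  rw [arcsineIntegral,
    ← integral_comp_one_sub_two_mul_div_sqrt fun x ↦ f ((a + b) / 2 + (b - a) / 2 * x)]
  congr! 4 with t
  ring

lemma sqrt_one_sub_div_self {t : ℝ} (ht : t ∈ Set.Ioo 0 1) :
    √((1 - t) / t) = (1 - t) / √(t * (1 - t)) := by
  have ht' : 0 < 1 - t := sub_pos.2 ht.2
  rw [sqrt_div ht'.le, sqrt_mul ht.1.le, div_mul_eq_div_div_swap, div_sqrt]

lemma integral_mul_sqrt_eq_arcsineIntegral_add_arcsineMoment {f : ℝ → ℝ} (hf : Continuous f)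
    (a b : ℝ) :
    ∫ t in (0 : ℝ)..1, f ((1 - t) * b + t * a) * √((1 - t) / t) =
      (arcsineIntegral f ((a + b) / 2) ((b - a) / 2) +
        arcsineMoment f ((a + b) / 2) ((b - a) / 2)) / 2 := by
  set c := (a + b) / 2 with hc
  set r := (b - a) / 2 with hr
  calc ∫ t in (0 : ℝ)..1, f ((1 - t) * b + t * a) * √((1 - t) / t)
      = ∫ t in (0 : ℝ)..1,
          f (c + r * (1 - 2 * t)) * ((1 + (1 - 2 * t)) / 2) / √(t * (1 - t)) := by
        refine integral_congr_Ioo_of_le zero_le_one fun t ht ↦ ?_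
        have affine_eq : (1 - t) * b + t * a = c + r * (1 - 2 * t) := by rw [hc, hr]; ring
        simp only [sqrt_one_sub_div_self ht, affine_eq]
        ring
    _ = ∫ θ in 0..π, f (c + r * cos θ) * ((1 + cos θ) / 2) :=
        integral_comp_one_sub_two_mul_div_sqrt fun x ↦ f (c + r * x) * ((1 + x) / 2)
    _ = (arcsineIntegral f c r + arcsineMoment f c r) / 2 := by
        rw [arcsineIntegral, arcsineMoment, ← integral_add
          (Continuous.intervalIntegrable (by fun_prop) _ _)
          (Continuous.intervalIntegrable (by fun_prop) _ _), ← intervalIntegral.integral_div]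
        congr 1 with θ
        ring

section Continuous

variable {f : ℝ → ℝ} (hf : Continuous f)

include hf

lemma continuous_arcsineIntegral : Continuous fun p : ℝ × ℝ ↦ arcsineIntegral f p.1 p.2 :=
  continuous_parametric_intervalIntegral_of_continuous' (by fun_prop) _ _

lemma continuous_arcsineMoment : Continuous fun p : ℝ × ℝ ↦ arcsineMoment f p.1 p.2 :=
  continuous_parametric_intervalIntegral_of_continuous' (by fun_prop) _ _

lemma arcsineIntegral_le_arcsineIntegral (hmono : Monotone f) {c c' r r' : ℝ}
    (h : |r' - r| ≤ c' - c) : arcsineIntegral f c r ≤ arcsineIntegral f c' r' := by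
  refine integral_mono_on pi_pos.le (Continuous.intervalIntegrable (by fun_prop) _ _)
    (Continuous.intervalIntegrable (by fun_prop) _ _) fun θ _ ↦ hmono ?_
  have hcos : |(r' - r) * cos θ| ≤ |r' - r| := by
    simpa only [abs_mul, mul_one] using
      mul_le_mul_of_nonneg_left (abs_cos_le_one θ) (abs_nonneg (r' - r))
  linarith [neg_abs_le ((r' - r) * cos θ)]

lemma exists_arcsineIntegral_eq_zero (hmono : Monotone f) (hroot : ∃ x, f x = 0) (r : ℝ) :
    ∃ c, arcsineIntegral f c r = 0 := by
  obtain ⟨x, hx⟩ := hroot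
  have hx0 : arcsineIntegral f x 0 = 0 := by simp [arcsineIntegral, hx]
  have hcont : Continuous fun c ↦ arcsineIntegral f c r :=
    (continuous_arcsineIntegral hf).comp (by fun_prop : Continuous fun c : ℝ ↦ (c, r))
  refine mem_range_of_exists_le_of_exists_ge hcont ⟨x - |r|, ?_⟩ ⟨x + |r|, ?_⟩
  · exact (arcsineIntegral_le_arcsineIntegral hf hmono (by simp)).trans_eq hx0
  · exact hx0.symm.trans_le (arcsineIntegral_le_arcsineIntegral hf hmono (by simp))

lemma integral_sub_mul_sub_eq_arcsine_pairing (c c' r r' : ℝ) :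
    ∫ θ in 0..π, (f (c' + r' * cos θ) - f (c + r * cos θ)) *
        ((c' + r' * cos θ) - (c + r * cos θ)) =
      (c' - c) * (arcsineIntegral f c' r' - arcsineIntegral f c r) +
        (r' - r) * (arcsineMoment f c' r' - arcsineMoment f c r) := by
  have integrable {k : ℝ → ℝ} (hk : Continuous k) : IntervalIntegrable k volume 0 π :=
    hk.intervalIntegrable _ _
  simp only [arcsineIntegral, arcsineMoment]
  rw [← integral_sub (integrable (by fun_prop)) (integrable (by fun_prop)),
    ← integral_sub (integrable (by fun_prop)) (integrable (by fun_prop)),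
    ← intervalIntegral.integral_const_mul, ← intervalIntegral.integral_const_mul,
    ← integral_add (integrable (by fun_prop)) (integrable (by fun_prop))]
  congr 1 with θ
  ring

end Continuous

section StrictMono

variable {f : ℝ → ℝ} (hf : Continuous f) (hmono : StrictMono f)

include hmono in
lemma sub_mul_sub_pos_of_ne {x y : ℝ} (hxy : x ≠ y) : 0 < (f x - f y) * (x - y) := by
  rcases hxy.lt_or_gt with h | h
  · exact mul_pos_of_neg_of_neg (sub_neg.2 (hmono h)) (sub_neg.2 h)
  · exact mul_pos (sub_pos.2 (hmono h)) (sub_pos.2 h)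

include hf hmono

lemma arcsine_pairing_pos {c c' r r' : ℝ} (hne : (c', r') ≠ (c, r)) :
    0 < (c' - c) * (arcsineIntegral f c' r' - arcsineIntegral f c r) +
      (r' - r) * (arcsineMoment f c' r' - arcsineMoment f c r) := by
  rw [← integral_sub_mul_sub_eq_arcsine_pairing hf]
  refine integral_pos pi_pos (by fun_prop) (fun θ _ ↦ ?_) ?_
  · by_cases h : c' + r' * cos θ = c + r * cos θ
    · simp [h]
    · exact (sub_mul_sub_pos_of_ne hmono h).le
  -- The two affine functions of `cos θ` differ at an endpoint, since they do not coincide.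
  · by_cases h : c' + r' = c + r
    · refine ⟨π, ⟨pi_pos.le, le_rfl⟩, sub_mul_sub_pos_of_ne hmono fun h' ↦ hne ?_⟩
      rw [cos_pi] at h'
      ext <;> simp only <;> linarith
    · refine ⟨0, ⟨le_rfl, pi_pos.le⟩, sub_mul_sub_pos_of_ne hmono ?_⟩
      simpa only [cos_zero, mul_one] using h

lemma strictMono_arcsineIntegral (r : ℝ) : StrictMono fun c ↦ arcsineIntegral f c r := by
  intro c c' hcc'
  have pairing := arcsine_pairing_pos hf hmono (c := c) (c' := c') (r := r) (r' := r)
    fun h ↦ hcc'.ne' (congrArg Prod.fst h)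
  rw [sub_self, zero_mul, add_zero] at pairing
  exact sub_pos.1 (pos_of_mul_pos_right pairing (sub_pos.2 hcc').le)

lemma arcsineMoment_lt_arcsineMoment {c c' r r' : ℝ} (hr : r < r')
    (hc : arcsineIntegral f c r = 0) (hc' : arcsineIntegral f c' r' = 0) :
    arcsineMoment f c r < arcsineMoment f c' r' := by
  have pairing := arcsine_pairing_pos hf hmono (c := c) (c' := c') (r := r) (r' := r')
    fun h ↦ hr.ne' (congrArg Prod.snd h)
  rw [hc, hc', sub_self, mul_zero, zero_add] at pairing
  exact sub_pos.1 (pos_of_mul_pos_right pairing (sub_pos.2 hr).le)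

lemma exists_lipschitzWith_arcsineIntegral_eq_zero (hroot : ∃ x, f x = 0) :
    ∃ c : ℝ → ℝ, LipschitzWith 1 c ∧ ∀ r, arcsineIntegral f (c r) r = 0 := by
  choose c hc using exists_arcsineIntegral_eq_zero hf hmono.monotone hroot
  refine ⟨c, LipschitzWith.of_le_add fun r s ↦ ?_, hc⟩
  rw [← (strictMono_arcsineIntegral hf hmono r).le_iff_le, hc r, ← hc s]
  exact arcsineIntegral_le_arcsineIntegral hf hmono.monotone (by simp [Real.dist_eq])

lemma exists_arcsineIntegral_eq_zero_and_mul_arcsineMoment_eq (hroot : ∃ x, f x = 0) {κ : ℝ}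
    (hκ : 0 < κ) :
    ∃ c r, 0 < r ∧ arcsineIntegral f c r = 0 ∧ r * arcsineMoment f c r = κ := by
  obtain ⟨c, hlip, hc⟩ := exists_lipschitzWith_arcsineIntegral_eq_zero hf hmono hroot
  set H : ℝ → ℝ := fun r ↦ arcsineMoment f (c r) r
  have hH_mono : StrictMono H := fun r s hrs ↦
    arcsineMoment_lt_arcsineMoment hf hmono hrs (hc r) (hc s)
  have hH_zero : H 0 = 0 := by simp [H, arcsineMoment]
  have hH_one : 0 < H 1 := hH_zero.symm.trans_lt (hH_mono one_pos)
  have hcont : Continuous fun r ↦ r * H r :=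
    continuous_id.mul ((continuous_arcsineMoment hf).comp (hlip.continuous.prodMk continuous_id))
  set R := max 1 (κ / H 1)
  have hR : κ ≤ R * H R := calc
    κ = κ / H 1 * H 1 := (div_mul_cancel₀ κ hH_one.ne').symm
    _ ≤ R * H R := by
      gcongr
      · exact le_max_right _ _
      · exact hH_mono.monotone (le_max_left _ _)
  obtain ⟨r, hr, hrκ⟩ := intermediate_value_Icc (zero_le_one.trans (le_max_left _ _))
    hcont.continuousOn ⟨by simpa only [zero_mul] using hκ.le, hR⟩
  have hr0 : r ≠ 0 := by
    rintro rfl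
    exact hκ.ne (by simpa only [zero_mul] using hrκ)
  exact ⟨c r, r, lt_of_le_of_ne hr.1 hr0.symm, hc r, hrκ⟩

lemma eq_of_arcsineIntegral_eq_zero_of_mul_arcsineMoment_eq {κ c c' r r' : ℝ} (hκ : 0 < κ)
    (hr : 0 < r) (hr' : 0 < r')
    (hc : arcsineIntegral f c r = 0) (hc' : arcsineIntegral f c' r' = 0)
    (hκr : r * arcsineMoment f c r = κ) (hκr' : r' * arcsineMoment f c' r' = κ) :
    (c', r') = (c, r) := by
  by_contra hne
  have pairing := arcsine_pairing_pos hf hmono hne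
  rw [hc, hc', eq_div_of_mul_eq hr.ne' ((mul_comm _ _).trans hκr),
    eq_div_of_mul_eq hr'.ne' ((mul_comm _ _).trans hκr')] at pairing
  have pairing_eq : (c' - c) * (0 - 0) + (r' - r) * (κ / r' - κ / r) =
      -(κ * (r' - r) ^ 2 / (r * r')) := by
    field_simp
    ring
  have : 0 ≤ κ * (r' - r) ^ 2 / (r * r') := by positivity
  linarith

theorem exists_unique_soft_pair_general (hroot : ∃ x, f x = 0) {κ : ℝ} (hκ : 0 < κ) :
    ∃! p : ℝ × ℝ, p.1 < p.2 ∧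
      ∫ t in (0 : ℝ)..1, f ((1 - t) * p.2 + t * p.1) / √(t * (1 - t)) = 0 ∧
      (p.2 - p.1) * ∫ t in (0 : ℝ)..1, f ((1 - t) * p.2 + t * p.1) * √((1 - t) / t) = κ := by
  simp only [integral_div_sqrt_eq_arcsineIntegral,
    integral_mul_sqrt_eq_arcsineIntegral_add_arcsineMoment hf]
  obtain ⟨c, r, hr, hc, hκr⟩ :=
    exists_arcsineIntegral_eq_zero_and_mul_arcsineMoment_eq hf hmono hroot hκ
  have hcenter : (c - r + (c + r)) / 2 = c := by ring
  have hradius : (c + r - (c - r)) / 2 = r := by ring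
  refine ⟨(c - r, c + r), ⟨by linarith, ?_, ?_⟩, ?_⟩
  · rwa [hcenter, hradius]
  · rw [hcenter, hradius, hc]
    linarith
  · rintro ⟨a, b⟩ ⟨hab, hΦ, hΨ⟩
    rw [hΦ] at hΨ
    have heq := eq_of_arcsineIntegral_eq_zero_of_mul_arcsineMoment_eq hf hmono hκ hr
      (half_pos (sub_pos.2 hab)) hc hΦ hκr (by linarith)
    rw [Prod.mk.injEq] at heq ⊢
    constructor <;> linarith

end StrictMono

end

section Polynomial

open Filter

lemma monotone_eval_of_derivative_nonneg {P : Polynomial ℝ}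
    (hP : ∀ x, 0 ≤ P.derivative.eval x) : Monotone fun x ↦ P.eval x :=
  monotone_of_deriv_nonneg P.differentiable fun x ↦ by simpa only [Polynomial.deriv] using hP x

variable {P : Polynomial ℝ} (hmono : Monotone fun x ↦ P.eval x) (hdeg : 0 < P.degree)

include hmono hdeg

lemma strictMono_eval_of_monotone : StrictMono fun x ↦ P.eval x := by
  intro x y hxy
  refine (hmono hxy.le).lt_of_ne fun heq ↦ ?_
  have hconst : P = Polynomial.C (P.eval x) := by
    refine Polynomial.eq_of_infinite_eval_eq _ _ ((Set.Icc_infinite hxy).mono fun z hz ↦ ?_)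
    rw [Set.mem_ofPred_eq, Polynomial.eval_C]
    exact le_antisymm ((hmono hz.2).trans_eq heq.symm) (hmono hz.1)
  rw [hconst] at hdeg
  exact hdeg.not_ge Polynomial.degree_C_le

lemma surjective_eval_of_monotone : Function.Surjective fun x ↦ P.eval x := by
  refine P.continuous.surjective ?_ ?_
  · refine (tendsto_atTop_of_monotone hmono).resolve_right fun ⟨l, hl⟩ ↦ ?_
    exact not_tendsto_nhds_of_tendsto_atTop (P.abs_tendsto_atTop hdeg) _ hl.abs
  · refine (tendsto_atBot_of_monotone hmono).resolve_right fun ⟨l, hl⟩ ↦ ?_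
    exact not_tendsto_nhds_of_tendsto_atTop (P.abs_tendsto_atBot hdeg) _ hl.abs

end Polynomial

/-- There is a unique pair `(a₀, b₀)` with `a₀ < b₀`, `φ(a₀,b₀) = 0` and `ψ(a₀,b₀) = 0`. -/
theorem exists_unique_soft_pair (Q : Polynomial ℝ) (m : ℕ) (hm : 1 ≤ m)
    (hdeg : Q.natDegree = 2 * m) (hlead : 0 < Q.leadingCoeff)
    (hconv : ∀ x : ℝ, 0 ≤ Q.derivative.derivative.eval x) :
    ∃! p : ℝ × ℝ, p.1 < p.2 ∧ phi Q p.1 p.2 = 0 ∧ psi Q p.1 p.2 = 0 := by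
  have hmono := monotone_eval_of_derivative_nonneg hconv
  have hdeg' : 0 < Q.derivative.degree := by
    rw [← Polynomial.natDegree_pos_iff_degree_pos, Polynomial.natDegree_derivative]
    lia
  simpa only [phi, psi, sub_eq_zero] using exists_unique_soft_pair_general Q.derivative.continuous
    (strictMono_eval_of_monotone hmono hdeg') (surjective_eval_of_monotone hmono hdeg' 0)
    Real.two_pi_pos
end

section
/- Let Q be as in the context and let a < b be real numbers with ψ(a,b) = 0. Define p(x) = (1/(2π)) · ∫_a^b D(x,t) · √((t−a)/(b−t)) dt + (1/2)·Q'(x). Then (1/π) · ∫_a^b p(x) · √((b−x)/(x−a)) dx = 1; that is, the measure with density h(x) = (1/π)·p(x)·√((b−x)/(x−a)) on [a,b] has total mass 1. -/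
open MeasureTheory intervalIntegral

/-- The divided difference `D(x,t) = (Q'(x) − Q'(t))/(x − t)` for `t ≠ x`, `D(x,x) = Q''(x)`. -/
noncomputable def divDiff (Q : Polynomial ℝ) (x t : ℝ) : ℝ :=
  if x = t then Q.derivative.derivative.eval x
  else (Q.derivative.eval x - Q.derivative.eval t) / (x - t)

/-- `p(x) = (1/(2π)) ∫_a^b D(x,t)·√((t−a)/(b−t)) dt + (1/2)·Q'(x)`. -/
noncomputable def pFun (Q : Polynomial ℝ) (a b x : ℝ) : ℝ :=
  (1 / (2 * Real.pi)) * (∫ t in a..b, divDiff Q x t * Real.sqrt ((t - a) / (b - t)))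
    + (1 / 2) * Q.derivative.eval x

/-!
Write `a = c - r`, `b = c + r` and substitute `x = c + r cos θ`, `t = c + r cos φ`. The two weights
become `r (1 - cos θ) dθ` and `r (1 + cos φ) dφ`, and `Q'` becomes a polynomial `P` in the cosine.
Since `ψ(a,b) + 2π = r ∫₀^π P(cos θ) (1 + cos θ) dθ`, everything reduces to the identity
`∬ (P(u) - P(v)) / (u - v) · (1 - u) (1 + v) dθ dφ = 2π ∫ P(u) u dθ` with `u = cos θ`, `v = cos φ`.
For `P = Xⁿ` it says, with `cₖ = ∫₀^π cosᵏ`, that the convolution of `cᵢ - cᵢ₊₁` with `cⱼ + cⱼ₊₁`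
over `i + j = n - 1` equals `2π cₙ₊₁`. The mixed terms cancel by symmetry, and the rest telescopes
because the self-convolution `Sₙ = ∑ cᵢ cₙ₋ᵢ` satisfies `Sₙ₊₂ = Sₙ`.
-/

section

open Real Polynomial Finset

/-- The moment `∫₀^π cosⁿ θ dθ` of the arcsine distribution on `[-1, 1]`, with total mass `π`. -/
noncomputable def cosMoment (n : ℕ) : ℝ := ∫ θ in 0..π, cos θ ^ n

lemma cosMoment_zero : cosMoment 0 = π := by simp [cosMoment]

lemma cosMoment_one : cosMoment 1 = 0 := by simp [cosMoment]

lemma cosMoment_add_two (n : ℕ) : (n + 2) * cosMoment (n + 2) = (n + 1) * cosMoment n := by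
  simp only [cosMoment, integral_cos_pow, sin_pi, sin_zero, mul_zero, sub_zero, zero_div, zero_add]
  field_simp

lemma integral_cos_pow_mul_one_add_cos (n : ℕ) :
    ∫ θ in 0..π, cos θ ^ n * (1 + cos θ) = cosMoment n + cosMoment (n + 1) := by
  simp only [cosMoment, mul_one_add, ← pow_succ]
  exact integral_add (Continuous.intervalIntegrable (by fun_prop) _ _)
    (Continuous.intervalIntegrable (by fun_prop) _ _)

lemma integral_cos_pow_mul_one_sub_cos (n : ℕ) :
    ∫ θ in 0..π, cos θ ^ n * (1 - cos θ) = cosMoment n - cosMoment (n + 1) := by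
  simp only [cosMoment, mul_one_sub, ← pow_succ]
  exact integral_sub (Continuous.intervalIntegrable (by fun_prop) _ _)
    (Continuous.intervalIntegrable (by fun_prop) _ _)

lemma two_mul_sum_antidiagonal_fst_add_mul {R : Type*} [CommSemiring R] (f : ℕ → R) (e : R)
    (n : ℕ) :
    2 * ∑ p ∈ antidiagonal n, (p.1 + e) * (f p.1 * f p.2) =
      (n + 2 * e) * ∑ p ∈ antidiagonal n, f p.1 * f p.2 := by
  have swap : ∑ p ∈ antidiagonal n, (p.1 + e) * (f p.1 * f p.2) =
      ∑ p ∈ antidiagonal n, (p.2 + e) * (f p.1 * f p.2) := by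
    rw [← Nat.sum_antidiagonal_swap]
    exact sum_congr rfl fun p _ ↦ by rw [Prod.fst_swap, Prod.snd_swap, mul_comm (f p.2)]
  rw [two_mul]
  nth_rw 2 [swap]
  rw [← sum_add_distrib, mul_sum]
  refine sum_congr rfl fun p hp ↦ ?_
  rw [← mem_antidiagonal.1 hp]
  push_cast
  ring

-- In generating-function terms: `∑ cosMoment n * zⁿ = π / √(1 - z²)` has square `π² / (1 - z²)`,
-- whose coefficients have period two.
lemma sum_antidiagonal_cosMoment_mul_add_two (n : ℕ) :
    ∑ p ∈ antidiagonal (n + 2), cosMoment p.1 * cosMoment p.2 =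
      ∑ p ∈ antidiagonal n, cosMoment p.1 * cosMoment p.2 := by
  have shift : ∑ p ∈ antidiagonal (n + 2), ((p.1 : ℝ) + 0) * (cosMoment p.1 * cosMoment p.2) =
      ∑ p ∈ antidiagonal n, ((p.1 : ℝ) + 1) * (cosMoment p.1 * cosMoment p.2) := by
    rw [Nat.sum_antidiagonal_succ, Nat.sum_antidiagonal_succ]
    simp only [zero_add, add_assoc, one_add_one_eq_two, cosMoment_one, Nat.cast_zero, zero_mul,
      mul_zero, add_zero, ← mul_assoc, ← cosMoment_add_two, Nat.cast_add, Nat.cast_ofNat]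
  have hn : (n : ℝ) + 2 ≠ 0 := by positivity
  apply mul_left_cancel₀ hn
  calc (n + 2) * ∑ p ∈ antidiagonal (n + 2), cosMoment p.1 * cosMoment p.2
      = 2 * ∑ p ∈ antidiagonal (n + 2), ((p.1 : ℝ) + 0) * (cosMoment p.1 * cosMoment p.2) := by
        rw [two_mul_sum_antidiagonal_fst_add_mul]; push_cast; ring
    _ = (n + 2) * ∑ p ∈ antidiagonal n, cosMoment p.1 * cosMoment p.2 := by
        rw [shift, two_mul_sum_antidiagonal_fst_add_mul]; ring

lemma sum_antidiagonal_cosMoment_sub_mul_add (n : ℕ) :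
    ∑ p ∈ antidiagonal n, (cosMoment p.1 - cosMoment (p.1 + 1)) *
      (cosMoment p.2 + cosMoment (p.2 + 1)) = 2 * π * cosMoment (n + 2) := by
  have swap : ∑ p ∈ antidiagonal n, cosMoment (p.1 + 1) * cosMoment p.2 =
      ∑ p ∈ antidiagonal n, cosMoment p.1 * cosMoment (p.2 + 1) := by
    rw [← Nat.sum_antidiagonal_swap]
    simp only [Prod.fst_swap, Prod.snd_swap, mul_comm]
  have interior := sum_antidiagonal_cosMoment_mul_add_two n
  rw [Nat.sum_antidiagonal_succ, Nat.sum_antidiagonal_succ'] at interior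
  simp only [cosMoment_zero, add_assoc, one_add_one_eq_two] at interior
  simp only [sub_mul, mul_add, sum_sub_distrib, sum_add_distrib, swap]
  linarith

lemma sum_range_cosMoment_sub_mul_add (n : ℕ) :
    ∑ i ∈ range n, (cosMoment i - cosMoment (i + 1)) *
      (cosMoment (n - 1 - i) + cosMoment (n - 1 - i + 1)) = 2 * π * cosMoment (n + 1) := by
  cases n with
  | zero => simp [cosMoment_one]
  | succ n =>
    rw [← sum_antidiagonal_cosMoment_sub_mul_add, Nat.sum_antidiagonal_eq_sum_range_succ_mk,
      Nat.add_sub_cancel]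

section DividedDifference

variable {𝕜 : Type*} [NontriviallyNormedField 𝕜]

lemma dslope_comp_add_mul {E : Type*} [NormedAddCommGroup E] [NormedSpace 𝕜 E] {f : 𝕜 → E}
    (hf : Differentiable 𝕜 f) (c r u v : 𝕜) :
    dslope (fun x ↦ f (c + r * x)) u v = r • dslope f (c + r * u) (c + r * v) := by
  rcases eq_or_ne v u with rfl | huv
  · have inner : HasDerivAt (fun x ↦ c + r * x) r v := by
      simpa using! ((hasDerivAt_id v).const_mul r).const_add c
    rw [dslope_same, dslope_same]
    exact ((hf _).hasDerivAt.scomp v inner).deriv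
  · apply smul_right_injective E (sub_ne_zero.2 huv)
    calc (v - u) • dslope (fun x ↦ f (c + r * x)) u v
        = f (c + r * v) - f (c + r * u) := sub_smul_dslope _ u v
      _ = (v - u) • r • dslope f (c + r * u) (c + r * v) := by
        rw [← sub_smul_dslope f, smul_smul]; ring_nf

lemma dslope_eval (P : 𝕜[X]) (u v : 𝕜) :
    dslope P.eval u v =
      ∑ n ∈ P.support, P.coeff n * ∑ i ∈ range n, u ^ i * v ^ (n - 1 - i) := by
  rcases eq_or_ne v u with rfl | huv
  · simp only [dslope_same, Polynomial.deriv, derivative_eval, Polynomial.sum_def, geom_sum₂_self,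
      mul_assoc]
  · apply mul_right_cancel₀ (sub_ne_zero.2 huv.symm)
    calc dslope P.eval u v * (u - v)
        = P.eval u - P.eval v := by
          linear_combination -sub_smul_dslope P.eval u v
      _ = (∑ n ∈ P.support, P.coeff n * ∑ i ∈ range n, u ^ i * v ^ (n - 1 - i)) * (u - v) := by
          rw [eval_eq_sum, eval_eq_sum, Polynomial.sum_def, Polynomial.sum_def, ← sum_sub_distrib,
            sum_mul]
          exact sum_congr rfl fun n _ ↦ by rw [mul_assoc, geom_sum₂_mul, mul_sub]

lemma continuous_dslope_eval (P : 𝕜[X]) : Continuous fun x : 𝕜 × 𝕜 ↦ dslope P.eval x.1 x.2 := by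
  simp only [dslope_eval]
  fun_prop

end DividedDifference

lemma divDiff_eq_dslope (Q : ℝ[X]) (x t : ℝ) : divDiff Q x t = dslope Q.derivative.eval x t := by
  rcases eq_or_ne x t with rfl | hxt
  · simp [divDiff]
  · rw [divDiff, if_neg hxt, dslope_of_ne _ hxt.symm, slope_comm, slope_def_field]

lemma integral_dslope_eval_mul {g w : ℝ → ℝ} (hg : Continuous g) (hw : Continuous w) (P : ℝ[X])
    (a b u : ℝ) :
    ∫ t in a..b, dslope P.eval u (g t) * w t =
      ∑ n ∈ P.support, P.coeff n *
        ∑ i ∈ range n, u ^ i * ∫ t in a..b, g t ^ (n - 1 - i) * w t := by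
  simp only [dslope_eval, sum_mul, mul_assoc]
  rw [integral_finsetSum fun n _ ↦ Continuous.intervalIntegrable (by fun_prop) _ _]
  refine sum_congr rfl fun n _ ↦ ?_
  rw [intervalIntegral.integral_const_mul,
    integral_finsetSum fun i _ ↦ Continuous.intervalIntegrable (by fun_prop) _ _]
  simp only [intervalIntegral.integral_const_mul]

lemma integral_integral_dslope_eval_mul {f g v w : ℝ → ℝ} (hf : Continuous f) (hg : Continuous g)
    (hv : Continuous v) (hw : Continuous w) (P : ℝ[X]) (a b c d : ℝ) :
    ∫ s in a..b, (∫ t in c..d, dslope P.eval (f s) (g t) * w t) * v s =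
      ∑ n ∈ P.support, P.coeff n * ∑ i ∈ range n,
        (∫ s in a..b, f s ^ i * v s) * ∫ t in c..d, g t ^ (n - 1 - i) * w t := by
  simp only [integral_dslope_eval_mul hg hw, sum_mul, mul_assoc]
  rw [integral_finsetSum fun n _ ↦ Continuous.intervalIntegrable (by fun_prop) _ _]
  refine sum_congr rfl fun n _ ↦ ?_
  rw [intervalIntegral.integral_const_mul,
    integral_finsetSum fun i _ ↦ Continuous.intervalIntegrable (by fun_prop) _ _]
  simp only [← intervalIntegral.integral_mul_const, mul_right_comm _ (v _), mul_assoc]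

lemma integral_eval_cos_mul_cos (P : ℝ[X]) :
    ∫ θ in 0..π, P.eval (cos θ) * cos θ = ∑ n ∈ P.support, P.coeff n * cosMoment (n + 1) := by
  simp only [eval_eq_sum, Polynomial.sum_def, sum_mul, mul_assoc, ← pow_succ]
  rw [integral_finsetSum fun n _ ↦ Continuous.intervalIntegrable (by fun_prop) _ _]
  simp only [intervalIntegral.integral_const_mul, cosMoment]

lemma integral_integral_dslope_eval_cos (P : ℝ[X]) :
    ∫ θ in 0..π, (∫ φ in 0..π, dslope P.eval (cos θ) (cos φ) * (1 + cos φ)) * (1 - cos θ) =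
      2 * π * ∫ θ in 0..π, P.eval (cos θ) * cos θ := by
  rw [integral_integral_dslope_eval_mul (by fun_prop) (by fun_prop) (by fun_prop) (by fun_prop),
    integral_eval_cos_mul_cos, mul_sum]
  refine sum_congr rfl fun n _ ↦ ?_
  simp only [integral_cos_pow_mul_one_add_cos, integral_cos_pow_mul_one_sub_cos,
    sum_range_cosMoment_sub_mul_add]
  ring

lemma integral_integral_dslope_eval_cos_add_eval_cos (P : ℝ[X]) :
    ∫ θ in 0..π, (1 / (2 * π) * (∫ φ in 0..π, dslope P.eval (cos θ) (cos φ) * (1 + cos φ)) +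
      1 / 2 * P.eval (cos θ)) * (1 - cos θ) =
      1 / 2 * ∫ θ in 0..π, P.eval (cos θ) * (1 + cos θ) := by
  have h_dslope : Continuous fun θ ↦ ∫ φ in 0..π, dslope P.eval (cos θ) (cos φ) * (1 + cos φ) := by
    have := continuous_dslope_eval P
    exact continuous_parametric_intervalIntegral_of_continuous' (by fun_prop) 0 π
  calc ∫ θ in 0..π, (1 / (2 * π) * (∫ φ in 0..π, dslope P.eval (cos θ) (cos φ) * (1 + cos φ)) +
        1 / 2 * P.eval (cos θ)) * (1 - cos θ)
      = 1 / (2 * π) * (∫ θ in 0..π,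
          (∫ φ in 0..π, dslope P.eval (cos θ) (cos φ) * (1 + cos φ)) * (1 - cos θ)) +
        1 / 2 * ∫ θ in 0..π, P.eval (cos θ) * (1 - cos θ) := by
        simp only [add_mul, mul_assoc]
        rw [integral_add (Continuous.intervalIntegrable (by fun_prop) _ _)
          (Continuous.intervalIntegrable (by fun_prop) _ _), intervalIntegral.integral_const_mul,
          intervalIntegral.integral_const_mul]
    _ = (∫ θ in 0..π, P.eval (cos θ) * cos θ) +
        1 / 2 * ∫ θ in 0..π, P.eval (cos θ) * (1 - cos θ) := by
        rw [integral_integral_dslope_eval_cos]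
        field_simp
    _ = 1 / 2 * ∫ θ in 0..π, P.eval (cos θ) * (1 + cos θ) := by
        rw [← intervalIntegral.integral_const_mul, ← intervalIntegral.integral_const_mul,
          ← integral_add (Continuous.intervalIntegrable (by fun_prop) _ _)
            (Continuous.intervalIntegrable (by fun_prop) _ _)]
        exact integral_congr fun θ _ ↦ by ring

lemma sin_mul_sqrt_one_sub_cos_div_one_add_cos {θ : ℝ} (hθ : θ ∈ Set.Ioo 0 π) :
    sin θ * √((1 - cos θ) / (1 + cos θ)) = 1 - cos θ := by
  have h_sin : 0 < sin θ := sin_pos_of_mem_Ioo hθ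
  have h_cos : 0 < 1 + cos θ := by nlinarith [sin_sq_add_cos_sq θ, neg_one_le_cos θ]
  have h_ratio : (1 - cos θ) / (1 + cos θ) = ((1 - cos θ) / sin θ) ^ 2 := by
    field_simp
    linear_combination (1 - cos θ) * sin_sq_add_cos_sq θ
  rw [h_ratio, sqrt_sq (div_nonneg (sub_nonneg.2 (cos_le_one θ)) h_sin.le)]
  field_simp

lemma integral_eq_integral_comp_cos_mul_sin (g : ℝ → ℝ) :
    ∫ x in (-1)..1, g x = ∫ θ in 0..π, g (cos θ) * sin θ := by
  have h := integral_comp_mul_deriv_of_deriv_nonpos (a := 0) (b := π) (g := g)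
    continuous_cos.continuousOn (fun θ _ ↦ hasDerivAt_cos θ) fun θ hθ ↦ by
      rw [min_eq_left pi_pos.le, max_eq_right pi_pos.le] at hθ
      exact neg_nonpos.2 (sin_pos_of_mem_Ioo hθ).le
  rw [integral_symm, ← cos_pi, ← cos_zero, ← h, ← intervalIntegral.integral_neg]
  simp

section ArcsineSubstitution

variable (c r : ℝ) (f : ℝ → ℝ)

lemma integral_eq_mul_integral_add_mul_cos :
    ∫ x in (c - r)..(c + r), f x = r * ∫ θ in 0..π, f (c + r * cos θ) * sin θ := by
  rw [← integral_eq_integral_comp_cos_mul_sin fun x ↦ f (c + r * x), mul_integral_comp_add_mul]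
  ring_nf

lemma integral_mul_sqrt_right_sub_div_sub_left :
    ∫ x in (c - r)..(c + r), f x * √((c + r - x) / (x - (c - r))) =
      r * ∫ θ in 0..π, f (c + r * cos θ) * (1 - cos θ) := by
  rcases eq_or_ne r 0 with rfl | hr
  · simp
  rw [integral_eq_mul_integral_add_mul_cos]
  congr 1
  refine integral_congr_Ioo_of_le pi_pos.le fun θ hθ ↦ ?_
  have h_ratio : (c + r - (c + r * cos θ)) / (c + r * cos θ - (c - r)) =
      (1 - cos θ) / (1 + cos θ) := by
    rw [← mul_div_mul_left (1 - cos θ) (1 + cos θ) hr]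
    ring_nf
  simp only [h_ratio, mul_assoc, mul_comm (√_), sin_mul_sqrt_one_sub_cos_div_one_add_cos hθ]

-- Reflecting `r` to `-r` and `θ` to `π - θ` turns one weight into the other.
lemma integral_mul_sqrt_sub_left_div_right_sub :
    ∫ x in (c - r)..(c + r), f x * √((x - (c - r)) / (c + r - x)) =
      r * ∫ θ in 0..π, f (c + r * cos θ) * (1 + cos θ) := by
  have h_ratio (x : ℝ) : (x - (c - r)) / (c + r - x) = (c + -r - x) / (x - (c - -r)) := by
    rw [← neg_div_neg_eq]
    ring_nf
  have h_reflect := integral_comp_sub_left (a := 0) (b := π)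
    (fun θ ↦ f (c + r * cos θ) * (1 + cos θ)) π
  simp only [cos_pi_sub, sub_self, sub_zero] at h_reflect
  rw [← h_reflect, integral_symm]
  have h := integral_mul_sqrt_right_sub_div_sub_left c (-r) f
  simp only [← h_ratio] at h
  simp only [← sub_eq_add_neg, sub_neg_eq_add, neg_mul, mul_neg] at h ⊢
  rw [h, neg_neg]

end ArcsineSubstitution

lemma psi_add_two_pi (Q : ℝ[X]) (a b : ℝ) :
    psi Q a b + 2 * π = ∫ x in a..b, Q.derivative.eval x * √((x - a) / (b - x)) := by
  rcases eq_or_ne a b with rfl | hab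
  · simp [psi]
  have h_ratio (t : ℝ) : (b - (b - a) * t - a) / ((b - a) * t) = (1 - t) / t := by
    rw [← mul_div_mul_left (1 - t) t (sub_ne_zero.2 hab.symm)]
    ring_nf
  have h_point (t : ℝ) : (1 - t) * b + t * a = b - (b - a) * t := by ring
  have h_subst := mul_integral_comp_sub_mul (a := 0) (b := 1)
    (f := fun x ↦ Q.derivative.eval x * √((x - a) / (b - x))) (b - a) b
  simp only [sub_sub_cancel, h_ratio, mul_one, mul_zero, sub_zero] at h_subst
  simp only [psi, sub_add_cancel, h_point, h_subst]

lemma pFun_add_mul (Q : ℝ[X]) (c r u : ℝ) :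
    pFun Q (c - r) (c + r) (c + r * u) =
      1 / (2 * π) * (∫ φ in 0..π, dslope (Q.derivative.comp (C c + C r * X)).eval u (cos φ) *
        (1 + cos φ)) + 1 / 2 * (Q.derivative.comp (C c + C r * X)).eval u := by
  rw [pFun, integral_mul_sqrt_sub_left_div_right_sub, ← intervalIntegral.integral_const_mul]
  simp only [eval_comp, eval_add, eval_mul, eval_C, eval_X,
    dslope_comp_add_mul Q.derivative.differentiable, divDiff_eq_dslope, smul_eq_mul, mul_assoc]

theorem pFun_density_mass_one_general (Q : ℝ[X]) (a b : ℝ) :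
    (1 / π) * (∫ x in a..b, pFun Q a b x * √((b - x) / (x - a))) = 1 + psi Q a b / (2 * π) := by
  obtain ⟨c, r, rfl, rfl⟩ : ∃ c r, a = c - r ∧ b = c + r :=
    ⟨(a + b) / 2, (b - a) / 2, by ring, by ring⟩
  have h_psi := psi_add_two_pi Q (c - r) (c + r)
  rw [integral_mul_sqrt_sub_left_div_right_sub] at h_psi
  simp only [integral_mul_sqrt_right_sub_div_sub_left, pFun_add_mul]
  rw [integral_integral_dslope_eval_cos_add_eval_cos]
  simp only [eval_comp, eval_add, eval_mul, eval_C, eval_X]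
  field_simp
  linarith

end

/-- If `ψ(a,b) = 0`, then the density `h(x) = (1/π)·p(x)·√((b−x)/(x−a))` on `[a,b]`
has total mass `1`. -/
theorem pFun_density_mass_one (Q : Polynomial ℝ) (m : ℕ) (hm : 1 ≤ m)
    (hdeg : Q.natDegree = 2 * m) (hlead : 0 < Q.leadingCoeff)
    (hconv : ∀ x : ℝ, 0 ≤ Q.derivative.derivative.eval x)
    (a b : ℝ) (hab : a < b) (hpsi : psi Q a b = 0) :
    (1 / Real.pi) * (∫ x in a..b, pFun Q a b x * Real.sqrt ((b - x) / (x - a))) = 1 := by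
  rw [pFun_density_mass_one_general, hpsi, zero_div, add_zero]
end

section
/- Let σ and τ be real numbers with −√2 ≤ σ < τ ≤ √2. Define h(x) = (1/π) · ((τ−σ)²/8 + 1 + x·(σ+τ)/2 − x²) / √((τ−x)(x−σ)) for x ∈ (σ,τ). Then h(x) ≥ 0 for every x ∈ (σ,τ), and ∫_σ^τ h(x) dx = 1. -/
open MeasureTheory intervalIntegral

/-!
Write `q x = (τ - x) * (x - σ)`. The density is `1 / π` times the sum of the arcsine weight
`1 / √q`, whose integral over `(σ, τ)` is `π`, and the derivative of `f * √q` with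
`f x = x / 2 + (σ + τ) / 4`, which integrates to zero because `√q` vanishes at both walls.

The numerator of the density is concave, so its sign on `(σ, τ)` is decided at the two walls.
-/

theorem nonneg_on_Ioo_iff_of_concaveOn {a b : ℝ} {f : ℝ → ℝ} (hab : a < b)
    (hconc : ConcaveOn ℝ (Set.Icc a b) f) (hcont : ContinuousOn f (Set.Icc a b)) :
    (∀ x ∈ Set.Ioo a b, 0 ≤ f x) ↔ 0 ≤ f a ∧ 0 ≤ f b := by
  have ha : a ∈ Set.Icc a b := Set.left_mem_Icc.2 hab.le
  have hb : b ∈ Set.Icc a b := Set.right_mem_Icc.2 hab.le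
  constructor
  · intro hnonneg
    have hclosure := closure_Ioo hab.ne
    have hIcc : ∀ x ∈ Set.Icc a b, 0 ≤ f x := fun x hx =>
      le_on_closure hnonneg continuousOn_const (hclosure.symm ▸ hcont) (hclosure.symm ▸ hx)
    exact ⟨hIcc a ha, hIcc b hb⟩
  · rintro ⟨hfa, hfb⟩ x hx
    exact (le_min hfa hfb).trans (hconc.min_le_of_mem_Icc ha hb (Set.Ioo_subset_Icc_self hx))

section Weight

variable {σ τ x : ℝ}

theorem sub_mul_sub_pos_of_mem_Ioo (hx : x ∈ Set.Ioo σ τ) : 0 < (τ - x) * (x - σ) :=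
  mul_pos (sub_pos.2 hx.2) (sub_pos.2 hx.1)

theorem one_sub_rescale_sq (hστ : σ ≠ τ) :
    1 - ((2 * x - (σ + τ)) / (τ - σ)) ^ 2 = (2 / (τ - σ)) ^ 2 * ((τ - x) * (x - σ)) := by
  have hne : τ - σ ≠ 0 := sub_ne_zero.2 hστ.symm
  field_simp
  ring

theorem hasDerivAt_arcsin_rescale (hx : x ∈ Set.Ioo σ τ) :
    HasDerivAt (fun y => Real.arcsin ((2 * y - (σ + τ)) / (τ - σ)))
      (1 / Real.sqrt ((τ - x) * (x - σ))) x := by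
  have hlen : 0 < τ - σ := sub_pos.2 (hx.1.trans hx.2)
  have hscale : 0 < 2 / (τ - σ) := by positivity
  have hpos := sub_mul_sub_pos_of_mem_Ioo hx
  have hrescale : HasDerivAt (fun y : ℝ => (2 * y - (σ + τ)) / (τ - σ)) (2 / (τ - σ)) x := by
    simpa using (((hasDerivAt_id' x).const_mul 2).sub_const (σ + τ)).div_const (τ - σ)
  have hsq := one_sub_rescale_sq (x := x) (hx.1.trans hx.2).ne
  have hlt : 0 < 1 - ((2 * x - (σ + τ)) / (τ - σ)) ^ 2 := hsq ▸ by positivity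
  have hsqrt : Real.sqrt (1 - ((2 * x - (σ + τ)) / (τ - σ)) ^ 2)
      = 2 / (τ - σ) * Real.sqrt ((τ - x) * (x - σ)) := by
    rw [hsq, Real.sqrt_mul (sq_nonneg _), Real.sqrt_sq hscale.le]
  have harcsin := Real.hasDerivAt_arcsin (x := (2 * x - (σ + τ)) / (τ - σ))
    (by intro h; norm_num [h] at hlt) (by intro h; norm_num [h] at hlt)
  refine (harcsin.comp x hrescale).congr_deriv ?_
  rw [hsqrt]
  field_simp

theorem continuous_arcsin_rescale (σ τ : ℝ) :
    Continuous fun x => Real.arcsin ((2 * x - (σ + τ)) / (τ - σ)) :=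
  Real.continuous_arcsin.comp (by fun_prop)

theorem intervalIntegrable_one_div_sqrt_sub_mul_sub (hστ : σ ≤ τ) :
    IntervalIntegrable (fun x => 1 / Real.sqrt ((τ - x) * (x - σ))) volume σ τ :=
  (intervalIntegrable_iff_integrableOn_Ioc_of_le hστ).2 <|
    integrableOn_deriv_of_nonneg (continuous_arcsin_rescale σ τ).continuousOn
      (fun _ => hasDerivAt_arcsin_rescale) fun _ _ => by positivity

theorem integral_one_div_sqrt_sub_mul_sub (hστ : σ < τ) :
    ∫ x in σ..τ, 1 / Real.sqrt ((τ - x) * (x - σ)) = Real.pi := by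
  have hne : τ - σ ≠ 0 := (sub_pos.2 hστ).ne'
  have hright : (2 * τ - (σ + τ)) / (τ - σ) = 1 := (div_eq_iff hne).2 (by ring)
  have hleft : (2 * σ - (σ + τ)) / (τ - σ) = -1 := (div_eq_iff hne).2 (by ring)
  rw [integral_eq_sub_of_hasDerivAt_of_le hστ.le (continuous_arcsin_rescale σ τ).continuousOn
    (fun _ => hasDerivAt_arcsin_rescale) (intervalIntegrable_one_div_sqrt_sub_mul_sub hστ.le),
    hright, hleft, Real.arcsin_one, Real.arcsin_neg_one]
  ring

theorem hasDerivAt_mul_sqrt_sub_mul_sub {f : ℝ → ℝ} {d : ℝ} (hx : x ∈ Set.Ioo σ τ)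
    (hf : HasDerivAt f d x) :
    HasDerivAt (fun y => f y * Real.sqrt ((τ - y) * (y - σ)))
      ((d * ((τ - x) * (x - σ)) + f x * ((σ + τ) / 2 - x)) *
        (1 / Real.sqrt ((τ - x) * (x - σ)))) x := by
  have hpos := sub_mul_sub_pos_of_mem_Ioo hx
  have hprod : HasDerivAt (fun y : ℝ => (τ - y) * (y - σ)) (-1 * (x - σ) + (τ - x) * 1) x :=
    ((hasDerivAt_id' x).const_sub τ).mul ((hasDerivAt_id' x).sub_const σ)
  refine (hf.mul (hprod.sqrt hpos.ne')).congr_deriv ?_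
  have hsqrt_ne := (Real.sqrt_pos.2 hpos).ne'
  have hsq := Real.sq_sqrt hpos.le
  field_simp [hsqrt_ne]
  rw [hsq]
  ring

variable {f f' : ℝ → ℝ}

theorem intervalIntegrable_mul_one_div_sqrt_sub_mul_sub (hστ : σ ≤ τ)
    (hf : ContinuousOn f (Set.Icc σ τ)) :
    IntervalIntegrable (fun x => f x * (1 / Real.sqrt ((τ - x) * (x - σ)))) volume σ τ :=
  (intervalIntegrable_one_div_sqrt_sub_mul_sub hστ).continuousOn_mul (Set.uIcc_of_le hστ ▸ hf)

theorem integral_deriv_mul_sqrt_sub_mul_sub (hστ : σ ≤ τ) (hf : ContinuousOn f (Set.Icc σ τ))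
    (hf' : ContinuousOn f' (Set.Icc σ τ)) (hderiv : ∀ x ∈ Set.Ioo σ τ, HasDerivAt f (f' x) x) :
    ∫ x in σ..τ, (f' x * ((τ - x) * (x - σ)) + f x * ((σ + τ) / 2 - x)) *
      (1 / Real.sqrt ((τ - x) * (x - σ))) = 0 := by
  rw [integral_eq_sub_of_hasDerivAt_of_le hστ (f := fun x => f x * Real.sqrt ((τ - x) * (x - σ)))
    (by fun_prop) (fun x hx => hasDerivAt_mul_sqrt_sub_mul_sub hx (hderiv x hx))
    (intervalIntegrable_mul_one_div_sqrt_sub_mul_sub hστ (by fun_prop))]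
  simp

end Weight

section Density

/-- The numerator of the equilibrium density of the potential `x ^ 2` between hard walls at `σ` and
`τ`. -/
noncomputable def hardEdgeNumerator (σ τ x : ℝ) : ℝ :=
  (τ - σ) ^ 2 / 8 + 1 + x * (σ + τ) / 2 - x ^ 2

/-- The equilibrium density of the potential `x ^ 2` between hard walls at `σ` and `τ`; it is
meaningful only for `x` in the open interval `(σ, τ)`, since the square root takes the value `0`
elsewhere. -/
noncomputable def hardEdgeDensity (σ τ x : ℝ) : ℝ :=
  (1 / Real.pi) * (hardEdgeNumerator σ τ x / Real.sqrt ((τ - x) * (x - σ)))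

variable {σ τ : ℝ}

theorem concaveOn_hardEdgeNumerator (σ τ : ℝ) :
    ConcaveOn ℝ Set.univ (hardEdgeNumerator σ τ) := by
  refine ⟨convex_univ, fun x _ y _ a b ha hb hab => ?_⟩
  obtain rfl : b = 1 - a := by linarith
  have hgap : 0 ≤ a * (1 - a) * (x - y) ^ 2 := by positivity
  simp only [hardEdgeNumerator, smul_eq_mul]
  linarith

theorem continuous_hardEdgeNumerator (σ τ : ℝ) : Continuous (hardEdgeNumerator σ τ) := by
  unfold hardEdgeNumerator
  fun_prop

theorem hardEdgeNumerator_left (σ τ : ℝ) :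
    hardEdgeNumerator σ τ σ = (2 + ((σ + τ) / 2) ^ 2 - σ ^ 2) / 2 := by
  unfold hardEdgeNumerator
  ring

theorem hardEdgeNumerator_right (σ τ : ℝ) :
    hardEdgeNumerator σ τ τ = (2 + ((σ + τ) / 2) ^ 2 - τ ^ 2) / 2 := by
  unfold hardEdgeNumerator
  ring

theorem hardEdgeDensity_nonneg_iff {x : ℝ} (hx : x ∈ Set.Ioo σ τ) :
    0 ≤ hardEdgeDensity σ τ x ↔ 0 ≤ hardEdgeNumerator σ τ x := by
  have hsqrt := Real.sqrt_pos.2 (sub_mul_sub_pos_of_mem_Ioo hx)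
  rw [hardEdgeDensity, mul_nonneg_iff_of_pos_left (one_div_pos.2 Real.pi_pos),
    le_div_iff₀ hsqrt, zero_mul]

theorem hardEdgeDensity_nonneg_on_Ioo_iff (hστ : σ < τ) :
    (∀ x ∈ Set.Ioo σ τ, 0 ≤ hardEdgeDensity σ τ x) ↔
      σ ^ 2 ≤ 2 + ((σ + τ) / 2) ^ 2 ∧ τ ^ 2 ≤ 2 + ((σ + τ) / 2) ^ 2 := by
  rw [forall₂_congr fun _ => hardEdgeDensity_nonneg_iff,
    nonneg_on_Ioo_iff_of_concaveOn hστ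
      ((concaveOn_hardEdgeNumerator σ τ).subset (Set.subset_univ _) (convex_Icc σ τ))
      (continuous_hardEdgeNumerator σ τ).continuousOn,
    hardEdgeNumerator_left, hardEdgeNumerator_right]
  simp only [le_div_iff₀ (two_pos : (0 : ℝ) < 2), zero_mul, sub_nonneg]

theorem hardEdgeDensity_eq_arcsine_add_deriv (σ τ x : ℝ) :
    hardEdgeDensity σ τ x = (1 / Real.pi) * (1 / Real.sqrt ((τ - x) * (x - σ)) +
      (1 / 2 * ((τ - x) * (x - σ)) + (x / 2 + (σ + τ) / 4) * ((σ + τ) / 2 - x)) *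
        (1 / Real.sqrt ((τ - x) * (x - σ)))) := by
  unfold hardEdgeDensity hardEdgeNumerator
  ring

theorem integral_hardEdgeDensity (hστ : σ < τ) : ∫ x in σ..τ, hardEdgeDensity σ τ x = 1 := by
  have hderiv (x : ℝ) : HasDerivAt (fun y : ℝ => y / 2 + (σ + τ) / 4) (1 / 2) x :=
    ((hasDerivAt_id' x).div_const 2).add_const _
  have hzero := integral_deriv_mul_sqrt_sub_mul_sub hστ.le (f := fun x => x / 2 + (σ + τ) / 4)
    (f' := fun _ => 1 / 2) (by fun_prop) (by fun_prop) fun x _ => hderiv x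
  simp only [hardEdgeDensity_eq_arcsine_add_deriv]
  rw [intervalIntegral.integral_const_mul, intervalIntegral.integral_add
    (intervalIntegrable_one_div_sqrt_sub_mul_sub hστ.le)
    (intervalIntegrable_mul_one_div_sqrt_sub_mul_sub hστ.le (by fun_prop)),
    integral_one_div_sqrt_sub_mul_sub hστ, hzero, add_zero, one_div_mul_cancel Real.pi_ne_zero]

end Density

theorem gaussian_two_hard_edges_general (σ τ : ℝ) (hστ : σ < τ) :
    ((∀ x ∈ Set.Ioo σ τ,
        0 ≤ (1 / Real.pi) * (((τ - σ) ^ 2 / 8 + 1 + x * (σ + τ) / 2 - x ^ 2) /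
          Real.sqrt ((τ - x) * (x - σ)))) ↔
        σ ^ 2 ≤ 2 + ((σ + τ) / 2) ^ 2 ∧ τ ^ 2 ≤ 2 + ((σ + τ) / 2) ^ 2) ∧
      (∫ x in σ..τ, (1 / Real.pi) * (((τ - σ) ^ 2 / 8 + 1 + x * (σ + τ) / 2 - x ^ 2) /
          Real.sqrt ((τ - x) * (x - σ)))) = 1 :=
  ⟨hardEdgeDensity_nonneg_on_Ioo_iff hστ, integral_hardEdgeDensity hστ⟩

/-- The equilibrium density for the Gaussian potential `Q(x) = x²` with two hard walls at
`σ` and `τ`, `−√2 ≤ σ < τ ≤ √2`, is nonnegative on `(σ,τ)` and has total mass `1`. -/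
theorem gaussian_two_hard_edges (σ τ : ℝ) (hσ : -Real.sqrt 2 ≤ σ) (hστ : σ < τ)
    (hτ : τ ≤ Real.sqrt 2) :
    (∀ x ∈ Set.Ioo σ τ,
        0 ≤ (1 / Real.pi) * (((τ - σ) ^ 2 / 8 + 1 + x * (σ + τ) / 2 - x ^ 2) /
          Real.sqrt ((τ - x) * (x - σ)))) ∧
      (∫ x in σ..τ, (1 / Real.pi) * (((τ - σ) ^ 2 / 8 + 1 + x * (σ + τ) / 2 - x ^ 2) /
          Real.sqrt ((τ - x) * (x - σ)))) = 1 := by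
  exact (gaussian_two_hard_edges_general σ τ hστ).imp_left fun h => h.2
    ⟨le_add_of_le_of_nonneg ((Real.sq_le zero_le_two).2 ⟨hσ, hστ.le.trans hτ⟩) (sq_nonneg _),
      le_add_of_le_of_nonneg ((Real.sq_le zero_le_two).2 ⟨hσ.trans hστ.le, hτ⟩) (sq_nonneg _)⟩
end
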